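/- There is a universal constant C > 0 such that the following holds. For every 0 < ε < 1/2, every α > 0, every positive integer D, every integer m ≥ 2, and all vectors x_1, ..., x_m, y_1, ..., y_m ∈ ℝ^D with ‖x_i‖₂ ≤ √α and ‖y_i‖₂ ≤ √α for all i, if d is a positive integer with d ≥ C · log(m) / ε², then there exists a matrix M ∈ ℝ^{d×D} such that |⟨M x_i, M y_i⟩ − ⟨x_i, y_i⟩| ≤ ε α for all i = 1, ..., m. -/

import Mathlib

open scoped RealInnerProductSpace

/-- Rademacher sign. -/
def jlSg (b : Bool) : ℝ := if b then 1 else -1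

lemma jl_sum_succ (D : ℕ) (f : (Fin (D + 1) → Bool) → ℝ) :
    ∑ r, f r = ∑ r : Fin D → Bool, (f (Fin.cons true r) + f (Fin.cons false r)) := by
  rw [← (Fin.consEquiv (fun _ => Bool)).sum_comp f, Fintype.sum_prod_type]
  simp [Fin.consEquiv, Finset.sum_add_distrib]

lemma jl_two_exp (c s x : ℝ) :
    Real.exp (c * (s + x) ^ 2) + Real.exp (c * (s - x) ^ 2)
      ≤ 2 * Real.exp (c * (s ^ 2 + x ^ 2) + 2 * c ^ 2 * s ^ 2 * x ^ 2) := by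
  have h := Real.cosh_le_exp_half_sq (2 * c * s * x)
  have h1 : Real.exp (c * (s + x) ^ 2) + Real.exp (c * (s - x) ^ 2)
      = 2 * (Real.exp (c * (s ^ 2 + x ^ 2)) * Real.cosh (2 * c * s * x)) := by
    rw [Real.cosh_eq, show c * (s + x) ^ 2 = c * (s ^ 2 + x ^ 2) + 2 * c * s * x by ring,
      show c * (s - x) ^ 2 = c * (s ^ 2 + x ^ 2) + -(2 * c * s * x) by ring, Real.exp_add,
      Real.exp_add]
    ring
  rw [h1, Real.exp_add,
    show 2 * c ^ 2 * s ^ 2 * x ^ 2 = (2 * c * s * x) ^ 2 / 2 by ring]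
  gcongr

lemma jl_upper (D : ℕ) : ∀ (x : Fin D → ℝ) (c s : ℝ), 0 ≤ c → 2 * c * ∑ i, x i ^ 2 < 1 →
    ∑ r : Fin D → Bool, Real.exp (c * (s + ∑ i, jlSg (r i) * x i) ^ 2)
      ≤ 2 ^ D * Real.exp (c * (s ^ 2 + ∑ i, x i ^ 2) / (1 - 2 * c * ∑ i, x i ^ 2)) := by
  induction D with
  | zero => intro x c s hc h; simp
  | succ D ih =>
    intro x c s hc h
    rw [jl_sum_succ, Finset.sum_add_distrib]
    simp only [Fin.sum_univ_succ, Fin.cons_zero, Fin.cons_succ] at h ⊢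
    have hS : 0 ≤ ∑ i : Fin D, x i.succ ^ 2 := Finset.sum_nonneg fun _ _ => sq_nonneg _
    have hcx : 0 ≤ c * x 0 ^ 2 := by positivity
    have h' : 2 * c * ∑ i : Fin D, x i.succ ^ 2 < 1 := by nlinarith
    have i1 := ih (fun i => x i.succ) c (s + x 0) hc h'
    have i2 := ih (fun i => x i.succ) c (s - x 0) hc h'
    generalize (∑ i : Fin D, x i.succ ^ 2) = σ at *
    simp only [jlSg, if_true, Bool.false_eq_true, if_false, one_mul, neg_mul] at i1 i2 ⊢
    simp only [← add_assoc, ← sub_eq_add_neg] at i1 i2 ⊢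
    refine (add_le_add i1 i2).trans ?_
    have hA : 0 < 1 - 2 * c * σ := by linarith
    have hB : 0 < 1 - 2 * c * (x 0 ^ 2 + σ) := by linarith
    set k := c / (1 - 2 * c * σ) with hk
    have hk0 : 0 ≤ k := by positivity
    have e : ∀ t : ℝ, c * (t ^ 2 + σ) / (1 - 2 * c * σ) = k * t ^ 2 + k * σ := by
      intro t; rw [hk]; ring
    rw [e, e, Real.exp_add, Real.exp_add]
    have key := jl_two_exp k s (x 0)
    calc _ = 2 ^ D * Real.exp (k * σ) *
          (Real.exp (k * (s + x 0) ^ 2) + Real.exp (k * (s - x 0) ^ 2)) := by ring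
      _ ≤ 2 ^ D * Real.exp (k * σ) *
          (2 * Real.exp (k * (s ^ 2 + x 0 ^ 2) + 2 * k ^ 2 * s ^ 2 * x 0 ^ 2)) := by gcongr
      _ = 2 ^ (D + 1) * Real.exp
          (k * σ + (k * (s ^ 2 + x 0 ^ 2) + 2 * k ^ 2 * s ^ 2 * x 0 ^ 2)) := by
            rw [Real.exp_add (k * σ)]; ring
      _ ≤ _ := by
        gcongr
        have hc' : c = k * (1 - 2 * c * σ) := by rw [hk, div_mul_cancel₀ _ hA.ne']
        have hBA : 1 - 2 * c * (x 0 ^ 2 + σ) = (1 - 2 * c * σ) * (1 - 2 * k * x 0 ^ 2) := by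
          have : c * x 0 ^ 2 = k * (1 - 2 * c * σ) * x 0 ^ 2 := by rw [← hc']
          linear_combination (-2) * this
        have hT : 0 < 1 - 2 * k * x 0 ^ 2 := by
          rw [hBA] at hB; exact pos_of_mul_pos_right hB hA.le |> fun h => h
        have e2 : c * (s ^ 2 + x 0 ^ 2 + σ) / (1 - 2 * c * (x 0 ^ 2 + σ))
            = k * (s ^ 2 + x 0 ^ 2 + σ) / (1 - 2 * k * x 0 ^ 2) := by
          rw [hBA, hk]; field_simp
        rw [add_assoc] at e2
        first | rw [e2] | rw [← add_assoc] at e2; rw [e2]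
        rw [le_div_iff₀ hT]
        have p1 : 0 ≤ k ^ 3 * s ^ 2 * (x 0 ^ 2) ^ 2 := by positivity
        have p2 : 0 ≤ k ^ 2 * x 0 ^ 2 * σ := by
          have : 0 ≤ σ := hS
          positivity
        have p3 : 0 ≤ k ^ 2 * (x 0 ^ 2) ^ 2 := by positivity
        nlinarith

lemma jl_moment2 (D : ℕ) : ∀ (x : Fin D → ℝ) (s : ℝ),
    ∑ r : Fin D → Bool, (s + ∑ i, jlSg (r i) * x i) ^ 2 = 2 ^ D * (s ^ 2 + ∑ i, x i ^ 2) := by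
  induction D with
  | zero => intro x s; simp
  | succ D ih =>
    intro x s
    rw [jl_sum_succ, Finset.sum_add_distrib]
    simp only [Fin.sum_univ_succ, Fin.cons_zero, Fin.cons_succ]
    have i1 := ih (fun i => x i.succ) (s + x 0)
    have i2 := ih (fun i => x i.succ) (s - x 0)
    simp only [jlSg, if_true, Bool.false_eq_true, if_false, one_mul, neg_mul] at i1 i2 ⊢
    simp only [← add_assoc, ← sub_eq_add_neg] at i1 i2 ⊢
    rw [i1, i2]; ring

lemma jl_moment4 (D : ℕ) : ∀ (x : Fin D → ℝ) (s : ℝ),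
    ∑ r : Fin D → Bool, (s + ∑ i, jlSg (r i) * x i) ^ 4
      ≤ 2 ^ D * (s ^ 4 + 6 * s ^ 2 * ∑ i, x i ^ 2 + 3 * (∑ i, x i ^ 2) ^ 2) := by
  induction D with
  | zero => intro x s; simp
  | succ D ih =>
    intro x s
    rw [jl_sum_succ, Finset.sum_add_distrib]
    simp only [Fin.sum_univ_succ, Fin.cons_zero, Fin.cons_succ]
    have i1 := ih (fun i => x i.succ) (s + x 0)
    have i2 := ih (fun i => x i.succ) (s - x 0)
    simp only [jlSg, if_true, Bool.false_eq_true, if_false, one_mul, neg_mul] at i1 i2 ⊢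
    simp only [← add_assoc, ← sub_eq_add_neg] at i1 i2 ⊢
    refine (add_le_add i1 i2).trans ?_
    have : (0 : ℝ) ≤ 2 ^ D * (4 * x 0 ^ 4) := by positivity
    rw [pow_succ]
    linear_combination this

lemma jl_exp_neg (u : ℝ) (hu : 0 ≤ u) : Real.exp (-u) ≤ 1 - u + u ^ 2 / 2 := by
  have h := Real.quadratic_le_exp_of_nonneg hu
  rw [Real.exp_neg]
  have : 0 < 1 + u + u ^ 2 / 2 := by positivity
  refine (inv_anti₀ this h).trans ?_
  rw [inv_le_iff_one_le_mul₀ this]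
  nlinarith [sq_nonneg (u ^ 2)]

lemma jl_row_upper (D : ℕ) (x : Fin D → ℝ) (hx : ∑ i, x i ^ 2 ≤ 1) (c : ℝ) (hc : 0 ≤ c)
    (hc' : c ≤ 1 / 4) :
    ∑ r : Fin D → Bool, Real.exp (c * ((∑ i, jlSg (r i) * x i) ^ 2 - ∑ i, x i ^ 2))
      ≤ 2 ^ D * Real.exp (4 * c ^ 2) := by
  have hS : 0 ≤ ∑ i, x i ^ 2 := Finset.sum_nonneg fun _ _ => sq_nonneg _
  have h := jl_upper D x c 0 hc (by nlinarith)
  simp only [zero_add, mul_sub, Real.exp_sub, ← Finset.sum_div] at h ⊢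
  generalize (∑ i, x i ^ 2) = σ at *
  rw [div_le_iff₀ (Real.exp_pos _), mul_assoc, ← Real.exp_add]
  refine h.trans ?_
  gcongr
  have hcs : c * σ ≤ 1 / 4 := by nlinarith
  have hcs0 : 0 ≤ c * σ := by positivity
  rw [div_le_iff₀ (by linarith)]
  have h1 : c * σ * (c * σ) ≤ c * c := by
    have : c * σ ≤ c := by nlinarith
    exact mul_le_mul this this hcs0 hc
  nlinarith [mul_nonneg (sq_nonneg c) (by linarith : (0:ℝ) ≤ 1 / 4 - c * σ)]

lemma jl_row_lower (D : ℕ) (x : Fin D → ℝ) (hx : ∑ i, x i ^ 2 ≤ 1) (c : ℝ) (hc : 0 ≤ c) :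
    ∑ r : Fin D → Bool, Real.exp (-c * ((∑ i, jlSg (r i) * x i) ^ 2 - ∑ i, x i ^ 2))
      ≤ 2 ^ D * Real.exp (4 * c ^ 2) := by
  have hS : 0 ≤ ∑ i, x i ^ 2 := Finset.sum_nonneg fun _ _ => sq_nonneg _
  have h2 := jl_moment2 D x 0
  have h4 := jl_moment4 D x 0
  simp only [zero_add, mul_sub, Real.exp_sub, ← Finset.sum_div] at h2 h4 ⊢
  have h : ∑ r : Fin D → Bool, Real.exp (-c * (∑ i, jlSg (r i) * x i) ^ 2)
      ≤ ∑ r : Fin D → Bool, (1 - c * (∑ i, jlSg (r i) * x i) ^ 2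
        + c ^ 2 / 2 * (∑ i, jlSg (r i) * x i) ^ 4) := by
    refine Finset.sum_le_sum fun r _ => ?_
    have := jl_exp_neg (c * (∑ i, jlSg (r i) * x i) ^ 2) (by positivity)
    rw [neg_mul]
    refine this.trans (le_of_eq ?_)
    ring
  rw [Finset.sum_add_distrib, Finset.sum_sub_distrib, ← Finset.mul_sum, ← Finset.mul_sum, h2] at h
  simp only [Finset.sum_const, Finset.card_univ, Fintype.card_fun, Fintype.card_bool,
    Fintype.card_fin, nsmul_eq_mul, mul_one, Nat.cast_pow, Nat.cast_ofNat] at h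
  generalize (∑ i, x i ^ 2) = σ at *
  rw [div_le_iff₀ (Real.exp_pos _), mul_assoc, ← Real.exp_add]
  have hb : 1 + (-c * σ + 4 * c ^ 2) ≤ Real.exp (4 * c ^ 2 + -c * σ) := by
    have := Real.add_one_le_exp (4 * c ^ 2 + -c * σ); linarith
  have hm := mul_le_mul_of_nonneg_left h4 (by positivity : 0 ≤ c ^ 2 / 2)
  have hp : (0 : ℝ) < 2 ^ D := by positivity
  calc _ ≤ _ := h
    _ ≤ 2 ^ D * (1 + (-c * σ + 4 * c ^ 2)) := by
      have : 0 ≤ 2 ^ D * c ^ 2 * (1 - σ ^ 2) := by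
        have : 0 ≤ 1 - σ ^ 2 := by nlinarith
        positivity
      have : 0 ≤ 2 ^ D * c ^ 2 := by positivity
      nlinarith
    _ ≤ _ := by gcongr

lemma jl_prod (D d : ℕ) (c : ℝ) (B : ℝ) (g : (Fin D → Bool) → ℝ)
    (h : ∑ r, Real.exp (c * g r) ≤ B) :
    ∑ R : Fin d → (Fin D → Bool), Real.exp (c * ∑ k, g (R k)) ≤ B ^ d := by
  simp only [Finset.mul_sum, Real.exp_sum]
  rw [← Fintype.sum_pow (fun r => Real.exp (c * g r)) d]
  exact pow_le_pow_left₀ (Finset.sum_nonneg fun _ _ => (Real.exp_pos _).le) h d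

lemma jl_core {ι : Type*} [Fintype ι] (D d : ℕ) (v : ι → Fin D → ℝ)
    (hv : ∀ i, ∑ j, v i j ^ 2 ≤ 1) (e : ℝ) (he : 0 < e) (he1 : e ≤ 1)
    (hcard : 2 * (Fintype.card ι : ℝ) < Real.exp (d * e ^ 2 / 16)) :
    ∃ R : Fin d → Fin D → Bool, ∀ i,
      |∑ k, ((∑ j, jlSg (R k j) * v i j) ^ 2 - ∑ j, v i j ^ 2)| ≤ d * e := by
  by_contra! hcon
  set c := e / 8 with hc
  have hc0 : 0 < c := by positivity
  set W : (Fin d → Fin D → Bool) → ι → ℝ := fun R i =>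
    ∑ k, ((∑ j, jlSg (R k j) * v i j) ^ 2 - ∑ j, v i j ^ 2) with hW
  have lower : ∀ R, Real.exp (c * (d * e)) ≤
      ∑ i, (Real.exp (c * W R i) + Real.exp (-c * W R i)) := by
    intro R
    obtain ⟨i, hi⟩ := hcon R
    refine le_trans ?_ (Finset.single_le_sum (f := fun i =>
      Real.exp (c * W R i) + Real.exp (-c * W R i))
      (fun i _ => by positivity) (Finset.mem_univ i))
    have hp := Real.exp_pos (c * W R i)
    have hn := Real.exp_pos (-c * W R i)
    rcases lt_abs.1 hi with h | h
    · have : Real.exp (c * (d * e)) ≤ Real.exp (c * W R i) := by gcongr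
      linarith
    · have : Real.exp (c * (d * e)) ≤ Real.exp (-c * W R i) := by
        rw [neg_mul, ← mul_neg]; gcongr
      linarith
  have upper : ∑ R, ∑ i, (Real.exp (c * W R i) + Real.exp (-c * W R i))
      ≤ Fintype.card ι * (2 * (2 ^ D * Real.exp (4 * c ^ 2)) ^ d) := by
    rw [Finset.sum_comm]
    refine (Finset.sum_le_card_nsmul _ _ (2 * (2 ^ D * Real.exp (4 * c ^ 2)) ^ d) ?_).trans
      (by simp)
    intro i _
    rw [Finset.sum_add_distrib, two_mul]
    exact add_le_add
      (jl_prod D d c _ (fun r => (∑ j, jlSg (r j) * v i j) ^ 2 - ∑ j, v i j ^ 2)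
        (jl_row_upper D (v i) (hv i) c hc0.le (by rw [hc]; linarith)))
      (jl_prod D d (-c) _ (fun r => (∑ j, jlSg (r j) * v i j) ^ 2 - ∑ j, v i j ^ 2)
        (jl_row_lower D (v i) (hv i) c hc0.le))
  have tot := (Finset.card_nsmul_le_sum Finset.univ _ _ (fun R _ => lower R)).trans upper
  simp only [Finset.card_univ, Fintype.card_fun, Fintype.card_bool,
    Fintype.card_fin, nsmul_eq_mul, Nat.cast_pow, Nat.cast_ofNat, mul_pow, ← Real.exp_nat_mul]
    at tot
  have hp : (0 : ℝ) < (2 ^ D) ^ d := by positivity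
  have t2 : Real.exp (c * (d * e)) ≤ 2 * Fintype.card ι * Real.exp (d * (4 * c ^ 2)) := by
    refine le_of_mul_le_mul_left (tot.trans (le_of_eq ?_)) hp
    ring
  have e1 : c * (d * e) = d * e ^ 2 / 16 + d * (4 * c ^ 2) := by rw [hc]; ring
  rw [e1, Real.exp_add] at t2
  have := le_of_mul_le_mul_right t2 (Real.exp_pos _)
  linarith

/-- Johnson–Lindenstrauss for dot products: there is a universal constant
`C > 0` such that for every `0 < ε < 1/2`, `α > 0`, dimension `D ≥ 1`, and `m ≥ 2` pairs of
vectors of norm at most `√α`, whenever `d ≥ C * log m / ε²` there is a `d × D` matrix `M`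
preserving all `m` inner products `⟨x i, y i⟩` up to additive error `ε * α`. -/
theorem jl_dot_products : ∃ C : ℝ, 0 < C ∧
    ∀ (ε α : ℝ), 0 < ε → ε < 1 / 2 → 0 < α →
    ∀ (D : ℕ), 0 < D → ∀ (m : ℕ), 2 ≤ m →
    ∀ (x y : Fin m → EuclideanSpace ℝ (Fin D)),
    (∀ i, ‖x i‖ ≤ Real.sqrt α) → (∀ i, ‖y i‖ ≤ Real.sqrt α) →
    ∀ (d : ℕ), 0 < d → C * Real.log m / ε ^ 2 ≤ (d : ℝ) →
    ∃ M : Matrix (Fin d) (Fin D) ℝ,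
      ∀ i, |⟪Matrix.toEuclideanLin M (x i), Matrix.toEuclideanLin M (y i)⟫ - ⟪x i, y i⟫|
        ≤ ε * α := by
  refine ⟨256, by norm_num, ?_⟩
  intro ε α hε hε2 hα D hD m hm x y hx hy d hd hdm
  have hsα : 0 < Real.sqrt α := Real.sqrt_pos.2 hα
  have hsq : Real.sqrt α ^ 2 = α := Real.sq_sqrt hα.le
  set t : ℝ := (2 * Real.sqrt α)⁻¹ with ht
  have ht0 : 0 < t := by positivity
  have ht2 : t ^ 2 * (4 * α) = 1 := by
    rw [ht, inv_pow, mul_pow, hsq]; field_simp; norm_num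
  let w : Fin m ⊕ Fin m → EuclideanSpace ℝ (Fin D) :=
    Sum.elim (fun i => x i + y i) (fun i => x i - y i)
  have hw : ∀ i, ‖w i‖ ≤ 2 * Real.sqrt α := by
    rintro (i | i)
    · exact (norm_add_le _ _).trans (by linarith [hx i, hy i])
    · exact (norm_sub_le _ _).trans (by linarith [hx i, hy i])
  have hm2 : (2 : ℝ) ≤ m := by exact_mod_cast hm
  have hm0 : (0 : ℝ) < m := by linarith
  obtain ⟨R, hR⟩ := jl_core D d (fun i j => t * w i j) (by
      intro i
      simp only [mul_pow, ← Finset.mul_sum]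
      rw [← EuclideanSpace.real_norm_sq_eq, ← ht2, show 4 * α = (2 * Real.sqrt α) ^ 2 by
        rw [mul_pow, hsq]; norm_num]
      have := hw i
      gcongr) (ε / 2) (by positivity) (by linarith) (by
      rw [div_le_iff₀ (by positivity)] at hdm
      have h1 : Real.log m * 4 ≤ d * (ε / 2) ^ 2 / 16 := by linarith
      have h2 : Real.exp (Real.log m * 4) = (m : ℝ) ^ 4 := by
        rw [show Real.log m * 4 = ((4 : ℕ) : ℝ) * Real.log m by push_cast; ring,
          Real.exp_nat_mul, Real.exp_log hm0]
      refine lt_of_lt_of_le ?_ (h2 ▸ Real.exp_le_exp.2 h1)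
      simp only [Fintype.card_sum, Fintype.card_fin, Nat.cast_add]
      have h8 : (2 : ℝ) ^ 3 ≤ (m : ℝ) ^ 3 := by gcongr
      nlinarith)
  have hd0 : (0 : ℝ) < d := by exact_mod_cast hd
  have hsd : 0 < Real.sqrt d := Real.sqrt_pos.2 hd0
  have hsd2 : Real.sqrt d ^ 2 = d := Real.sq_sqrt hd0.le
  refine ⟨Matrix.of fun k j => (Real.sqrt d)⁻¹ * jlSg (R k j), ?_⟩
  set M : Matrix (Fin d) (Fin D) ℝ := Matrix.of fun k j => (Real.sqrt d)⁻¹ * jlSg (R k j) with hM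
  set L := Matrix.toEuclideanLin M with hL
  have key : ∀ i, |‖L (w i)‖ ^ 2 - ‖w i‖ ^ 2| ≤ 2 * ε * α := by
    intro i
    have h := hR i
    have h1 : ‖L (w i)‖ ^ 2 = (d : ℝ)⁻¹ * ∑ k, (∑ j, jlSg (R k j) * w i j) ^ 2 := by
      rw [EuclideanSpace.real_norm_sq_eq, Finset.mul_sum]
      refine Finset.sum_congr rfl fun k _ => ?_
      have : L (w i) k = (Real.sqrt d)⁻¹ * ∑ j, jlSg (R k j) * w i j := by
        simp [hL, hM, Matrix.toLpLin_apply, Matrix.mulVec, dotProduct, Finset.mul_sum, mul_assoc]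
      rw [this, mul_pow, inv_pow, hsd2]
    have h2 : ∑ k, ((∑ j, jlSg (R k j) * (t * w i j)) ^ 2 - ∑ j, (t * w i j) ^ 2)
        = d * t ^ 2 * (‖L (w i)‖ ^ 2 - ‖w i‖ ^ 2) := by
      rw [h1, EuclideanSpace.real_norm_sq_eq, Finset.sum_sub_distrib]
      simp only [mul_left_comm _ t, ← Finset.mul_sum, mul_pow, Finset.sum_const,
        Finset.card_univ, Fintype.card_fin, nsmul_eq_mul]
      field_simp
    rw [h2, abs_mul, abs_of_pos (by positivity)] at h
    have h3 : t ^ 2 * |‖L (w i)‖ ^ 2 - ‖w i‖ ^ 2| ≤ t ^ 2 * (2 * ε * α) := by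
      have : t ^ 2 * (2 * ε * α) = ε / 2 := by linear_combination ε / 2 * ht2
      rw [this]
      refine le_of_mul_le_mul_left ?_ hd0
      rw [← mul_assoc]; exact h
    exact le_of_mul_le_mul_left h3 (by positivity)
  intro i
  have ka := key (Sum.inl i)
  have kb := key (Sum.inr i)
  simp only [w, Sum.elim_inl, Sum.elim_inr, map_add, map_sub, norm_add_sq_real,
    norm_sub_sq_real] at ka kb
  rw [abs_le] at *
  constructor <;> linarith [ka.1, ka.2, kb.1, kb.2]
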